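/- arXiv:0807.2927 — 3 statements merged into one kernel-verified Lean document; each statement's English description precedes it below -/
import Mathlib

section
/- (Existence theorem for †-limits.) Let C be a unitary †-category enriched in commutative monoids with a zero object, binary †-equalizers and binary †-biproducts. Then C has all finite †-limits: for every functor F : J ⥤ C from a finite category J and every set Ω of objects of J such that every object of J admits a morphism from some object of Ω (a supporting subset), there exists a limit cone (L, l) over F satisfying the normalization condition ∑_{S ∈ Ω} l_S ≫ (l_S)† = 𝟙 L. -/
/-!
Write `P` for the †-biproduct of the objects `F s`, `s ∈ Ω`, with projections `p s`, so that
`∑ s ∈ Ω, p s ≫ (p s)† = 𝟙 P`. A cone over `F` is determined by its legs at `Ω`, because `Ω` is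
supporting, and a family of legs at `Ω` extends to a cone exactly when `x s ≫ F f = x t ≫ F g` for
all `f : s ⟶ j` and `g : t ⟶ j` with `s, t ∈ Ω`. These are finitely many equations on `P`, so a
composite of †-equalizers gives an isometry `e : L ⟶ P` that is universal among the morphisms
satisfying them, and `L` is a limit with legs `e ≫ p s` at `s ∈ Ω`. Normalization follows:
`∑ s ∈ Ω, e ≫ p s ≫ (p s)† ≫ e† = e ≫ e† = 𝟙 L`.

The biproduct is provided by `exists_finset_dagBiproduct`, the isometry by
`exists_joint_dagEqualizer`.
-/

open CategoryTheory CategoryTheory.Limits CategoryTheory.MonoidalCategory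

universe v u

/-- A †-category structure: a contravariant, identity-on-objects, involutive
assignment of morphisms. -/
structure DaggerData (C : Type u) [Category.{v} C] where
  dag : ∀ {A B : C}, (A ⟶ B) → (B ⟶ A)
  dag_id : ∀ A : C, dag (𝟙 A) = 𝟙 A
  dag_comp : ∀ {A B E : C} (f : A ⟶ B) (g : B ⟶ E), dag (f ≫ g) = dag g ≫ dag f
  dag_dag : ∀ {A B : C} (f : A ⟶ B), dag (dag f) = f

/-- Enrichment in commutative monoids: composition is bilinear and
zero morphisms are absorbing. -/
structure CMonEnriched (C : Type u) [Category.{v} C]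
    [∀ X Y : C, AddCommMonoid (X ⟶ Y)] : Prop where
  comp_add : ∀ {X Y Z : C} (f : X ⟶ Y) (g h : Y ⟶ Z), f ≫ (g + h) = f ≫ g + f ≫ h
  add_comp : ∀ {X Y Z : C} (f g : X ⟶ Y) (h : Y ⟶ Z), (f + g) ≫ h = f ≫ h + g ≫ h
  comp_zero : ∀ {X Y Z : C} (f : X ⟶ Y), f ≫ (0 : Y ⟶ Z) = 0
  zero_comp : ∀ {X Y Z : C} (f : Y ⟶ Z), (0 : X ⟶ Y) ≫ f = 0

/-- Existence of binary †-biproducts. -/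
def HasBinaryDagBiproducts {C : Type u} [Category.{v} C]
    [∀ X Y : C, AddCommMonoid (X ⟶ Y)] (D : DaggerData C) : Prop :=
  ∀ A B : C, ∃ (P : C) (iA : A ⟶ P) (iB : B ⟶ P),
    iA ≫ D.dag iA = 𝟙 A ∧ iB ≫ D.dag iB = 𝟙 B ∧
    iA ≫ D.dag iB = 0 ∧ iB ≫ D.dag iA = 0 ∧
    D.dag iA ≫ iA + D.dag iB ≫ iB = 𝟙 P

/-- Existence of †-equalizers of all parallel pairs: equalizers that are isometries. -/
def HasDagEqualizers {C : Type u} [Category.{v} C] (D : DaggerData C) : Prop :=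
  ∀ {X Y : C} (u v : X ⟶ Y), ∃ (E : C) (e : E ⟶ X),
    e ≫ u = e ≫ v ∧ e ≫ D.dag e = 𝟙 E ∧
    ∀ {W : C} (w : W ⟶ X), w ≫ u = w ≫ v → ∃! t : W ⟶ E, t ≫ e = w

/-- A †-category is unitary if every pair of isomorphic objects has a unitary
isomorphism between them. -/
def IsUnitaryCat {C : Type u} [Category.{v} C] (D : DaggerData C) : Prop :=
  ∀ {A B : C}, (A ≅ B) → ∃ u : A ⟶ B, u ≫ D.dag u = 𝟙 A ∧ D.dag u ≫ u = 𝟙 B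

theorem CMonEnriched.comp_sum {C : Type u} [Category.{v} C]
    [∀ X Y : C, AddCommMonoid (X ⟶ Y)] (En : CMonEnriched C) {ι : Type*} (S : Finset ι)
    {X Y Z : C} (f : X ⟶ Y) (g : ι → (Y ⟶ Z)) :
    f ≫ ∑ i ∈ S, g i = ∑ i ∈ S, f ≫ g i := by
  classical
  induction S using Finset.induction_on with
  | empty => simp [En.comp_zero]
  | insert a S ha ih => rw [Finset.sum_insert ha, Finset.sum_insert ha, En.comp_add, ih]

theorem CMonEnriched.sum_comp {C : Type u} [Category.{v} C]
    [∀ X Y : C, AddCommMonoid (X ⟶ Y)] (En : CMonEnriched C) {ι : Type*} (S : Finset ι)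
    {X Y Z : C} (g : ι → (X ⟶ Y)) (f : Y ⟶ Z) :
    (∑ i ∈ S, g i) ≫ f = ∑ i ∈ S, g i ≫ f := by
  classical
  induction S using Finset.induction_on with
  | empty => simp [En.zero_comp]
  | insert a S ha ih => rw [Finset.sum_insert ha, Finset.sum_insert ha, En.add_comp, ih]

/-- A finite family of objects has a †-biproduct, described by its projections `p`; the values of
`p` outside `S` are irrelevant. Uniqueness of the induced morphism `t` is a consequence of the
normalization equation. -/
theorem exists_finset_dagBiproduct {C : Type u} [Category.{v} C]
    [∀ X Y : C, AddCommMonoid (X ⟶ Y)] [HasZeroObject C]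
    (D : DaggerData C) (En : CMonEnriched C) (hbp : HasBinaryDagBiproducts D)
    {J : Type} (X : J → C) (S : Finset J) :
    ∃ (P : C) (p : ∀ j, P ⟶ X j),
      ∑ s ∈ S, p s ≫ D.dag (p s) = 𝟙 P ∧
      ∀ {W : C} (x : ∀ j, W ⟶ X j), ∃ t : W ⟶ P, ∀ s ∈ S, t ≫ p s = x s := by
  classical
  induction S using Finset.induction_on with
  | empty =>
    obtain ⟨Z, hZ⟩ := HasZeroObject.zero (C := C)
    exact ⟨Z, fun j => 0, hZ.eq_of_src _ _, fun x => ⟨0, by simp⟩⟩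
  | insert a S ha ih =>
    obtain ⟨P, p, hp, hlift⟩ := ih
    obtain ⟨Q, iA, iB, hAA, hBB, hAB, hBA, hsum⟩ := hbp (X a) P
    have hne : ∀ s ∈ S, s ≠ a := fun s hs h => ha (h ▸ hs)
    refine ⟨Q, Function.update (fun j => D.dag iB ≫ p j) a (D.dag iA), ?_, ?_⟩
    · have hS : ∑ s ∈ S, Function.update (fun j => D.dag iB ≫ p j) a (D.dag iA) s ≫
          D.dag (Function.update (fun j => D.dag iB ≫ p j) a (D.dag iA) s) =
          D.dag iB ≫ iB := by
        calc _ = ∑ s ∈ S, D.dag iB ≫ (p s ≫ D.dag (p s)) ≫ iB := by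
              refine Finset.sum_congr rfl fun s hs => ?_
              rw [Function.update_of_ne (hne s hs), D.dag_comp, D.dag_dag]
              simp only [Category.assoc]
          _ = _ := by
              rw [← En.comp_sum, ← En.sum_comp, hp, Category.id_comp]
      rw [Finset.sum_insert ha, hS, Function.update_self, D.dag_dag, hsum]
    · intro W x
      obtain ⟨t, ht⟩ := hlift x
      refine ⟨x a ≫ iA + t ≫ iB, fun s hs => ?_⟩
      rcases Finset.mem_insert.mp hs with rfl | hs
      · rw [Function.update_self, En.add_comp, Category.assoc, Category.assoc, hAA, hBA,
          En.comp_zero, Category.comp_id, add_zero]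
      · rw [Function.update_of_ne (hne s hs), En.add_comp, Category.assoc, Category.assoc,
          reassoc_of% hAB, reassoc_of% hBB, En.zero_comp, En.comp_zero, zero_add, ht s hs]

/-- Finitely many parallel pairs out of `X` have a joint equalizer that is an isometry: a composite
of †-equalizers. Uniqueness of the factorization follows from `e ≫ e† = 𝟙 E`. -/
theorem exists_joint_dagEqualizer {C : Type u} [Category.{v} C] (D : DaggerData C)
    (heq : HasDagEqualizers D) {ι : Type*} {X : C} (Y : ι → C) (f g : ∀ i, X ⟶ Y i)
    (S : Finset ι) :
    ∃ (E : C) (e : E ⟶ X), (∀ i ∈ S, e ≫ f i = e ≫ g i) ∧ e ≫ D.dag e = 𝟙 E ∧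
      ∀ {W : C} (w : W ⟶ X), (∀ i ∈ S, w ≫ f i = w ≫ g i) → ∃ t : W ⟶ E, t ≫ e = w := by
  classical
  induction S using Finset.induction_on with
  | empty =>
    exact ⟨X, 𝟙 X, by simp, by rw [D.dag_id, Category.id_comp],
      fun w _ => ⟨w, Category.comp_id w⟩⟩
  | insert a S ha ih =>
    obtain ⟨E, e, he, hiso, hlift⟩ := ih
    obtain ⟨E', e', he', hiso', hlift'⟩ := heq (e ≫ f a) (e ≫ g a)
    refine ⟨E', e' ≫ e, ?_, ?_, ?_⟩
    · intro i hi
      rcases Finset.mem_insert.mp hi with rfl | hi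
      · simpa only [Category.assoc] using he'
      · rw [Category.assoc, Category.assoc, he i hi]
    · rw [D.dag_comp, Category.assoc, reassoc_of% hiso, hiso']
    · intro W w hw
      obtain ⟨t, ht⟩ := hlift w fun i hi => hw i (Finset.mem_insert_of_mem hi)
      obtain ⟨t', ht', -⟩ := hlift' t (by
        rw [reassoc_of% ht, reassoc_of% ht]
        exact hw a (Finset.mem_insert_self a S))
      exact ⟨t', by rw [reassoc_of% ht', ht]⟩

/-- Existence theorem for †-limits: a unitary †-category enriched in commutative
monoids with a zero object, binary †-equalizers and binary †-biproducts has all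
finite †-limits: every functor from a finite category, together with a supporting
subset of objects, admits a limit cone satisfying the normalization condition. -/
theorem stmt11 {C : Type u} [Category.{v} C]
    [∀ X Y : C, AddCommMonoid (X ⟶ Y)] [HasZeroObject C]
    (D : DaggerData C) (En : CMonEnriched C) (hu : IsUnitaryCat D)
    (heq : HasDagEqualizers D) (hbp : HasBinaryDagBiproducts D)
    {J : Type} [SmallCategory J] [FinCategory J]
    (F : J ⥤ C) (Ω : Finset J)
    (hΩ : ∀ j : J, ∃ s ∈ Ω, Nonempty (s ⟶ j)) :
    ∃ c : Cone F, Nonempty (IsLimit c) ∧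
      ∑ s ∈ Ω, c.π.app s ≫ D.dag (c.π.app s) = 𝟙 c.pt := by
  classical
  obtain ⟨P, p, hp, hPlift⟩ := exists_finset_dagBiproduct D En hbp F.obj Ω
  -- An index is a cospan `s ⟶ j ⟵ t` with both feet in `Ω`.
  let ι := Σ (j : J) (s : Ω) (t : Ω), (s.1 ⟶ j) × (t.1 ⟶ j)
  obtain ⟨L, e, he, hiso, hLlift⟩ := exists_joint_dagEqualizer D heq (ι := ι)
    (fun i => F.obj i.1) (fun i => p i.2.1 ≫ F.map i.2.2.2.1)
    (fun i => p i.2.2.1 ≫ F.map i.2.2.2.2) Finset.univ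
  have hcompat : ∀ {j s t : J} (_ : s ∈ Ω) (_ : t ∈ Ω) (f : s ⟶ j) (g : t ⟶ j),
      e ≫ p s ≫ F.map f = e ≫ p t ≫ F.map g := fun {j s t} hs ht f g =>
    he ⟨j, ⟨s, hs⟩, ⟨t, ht⟩, (f, g)⟩ (Finset.mem_univ _)
  choose r hr hf using hΩ
  let φ : ∀ j, r j ⟶ j := fun j => (hf j).some
  let c : Cone F :=
    { pt := L
      π :=
        { app := fun j => e ≫ p (r j) ≫ F.map (φ j)
          naturality := fun j k h => by
            have := hcompat (hr k) (hr j) (φ k) (φ j ≫ h)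
            simpa using this } }
  have hcΩ : ∀ s ∈ Ω, c.π.app s = e ≫ p s := fun s hs => by
    simpa using hcompat (hr s) hs (φ s) (𝟙 s)
  have hfac : ∀ d : Cone F, ∃ t : d.pt ⟶ L, ∀ j, t ≫ c.π.app j = d.π.app j := fun d => by
    obtain ⟨w, hw⟩ := hPlift d.π.app
    obtain ⟨t, ht⟩ := hLlift w fun i _ => by
      rw [reassoc_of% hw _ i.2.1.2, reassoc_of% hw _ i.2.2.1.2, d.w, d.w]
    refine ⟨t, fun j => ?_⟩
    change t ≫ e ≫ p (r j) ≫ F.map (φ j) = _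
    rw [reassoc_of% ht, reassoc_of% hw _ (hr j), d.w]
  have hnorm : ∑ s ∈ Ω, c.π.app s ≫ D.dag (c.π.app s) = 𝟙 L := by
    calc _ = ∑ s ∈ Ω, e ≫ (p s ≫ D.dag (p s)) ≫ D.dag e := by
          refine Finset.sum_congr rfl fun s hs => ?_
          rw [hcΩ s hs, D.dag_comp]
          simp only [Category.assoc]
      _ = _ := by rw [← En.comp_sum, ← En.sum_comp, hp, Category.id_comp, hiso]
  choose lift hlift using hfac
  refine ⟨c, ⟨{ lift := lift, fac := hlift, uniq := fun d m hm => ?_ }⟩, hnorm⟩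
  -- The normalization equation makes the legs at `Ω` jointly monic.
  rw [← Category.comp_id m, ← Category.comp_id (lift d), ← hnorm, En.comp_sum, En.comp_sum]
  exact Finset.sum_congr rfl fun s _ => by rw [reassoc_of% hm s, reassoc_of% hlift d s]
end

section
/- Let C be a monoidal †-category, enriched in commutative monoids, with a simple tensor unit, a zero object, binary †-biproducts and †-equalizers of all parallel pairs. Then for any scalars a, b, A, B : I ⟶ I: if a ≫ A + b ≫ B = a ≫ B + b ≫ A and a ≠ b, then A = B. -/
/-!
Write `p = e† ≫ e` for a †-equalizer `e` of `u, v : X ⟶ Y`. Then `p` is self-adjoint, `p ≫ u = p ≫ v`,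
and `p` fixes every morphism that equalizes `u` and `v` (`exists_projection`).

Additive cancellation on hom-sets (`cancel_add`): if `f + h = g + h`, the maps `[f, h]` and `[g, h]`
out of `X ⊕ X` are equalized by `(0, 1)` and `(1, 1)`. The corresponding `p` fixes both, which together
with self-adjointness forces its matrix to fix `(1, 0)` as well, so `f = g`.

For the theorem, `[A, B]` and `[B, A]` on `I ⊕ I` are equalized by `(1, 1)` and `(a, b)`. If `x`, `w`
are the entries in the first column of the matrix of `p`, this gives `x + w = 1` and
`a x + b w = a = a x + a w`, so `b w = a w` by cancellation. Since `I` is simple and `a ≠ b`, the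
equalizer of `a` and `b` is zero, hence `w = 0` and `x = 1`. Self-adjointness kills the other
off-diagonal entry, so `p` fixes `(1, 0)`, and `A = B`.
-/

open CategoryTheory CategoryTheory.Limits CategoryTheory.MonoidalCategory

universe v u

/-- The dagger is not assumed additive, but it preserves zero because zero morphisms factor
through a zero object. -/
theorem dag_zero {C : Type u} [Category.{v} C]
    [∀ X Y : C, AddCommMonoid (X ⟶ Y)] [HasZeroObject C]
    (D : DaggerData C) (En : CMonEnriched C) (X Y : C) :
    D.dag (0 : X ⟶ Y) = 0 := by
  obtain ⟨Z, hZ⟩ := HasZeroObject.zero (C := C)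
  have h1 : (0 : X ⟶ Y) = (0 : X ⟶ Z) ≫ (0 : Z ⟶ Y) := (En.zero_comp _).symm
  rw [h1, D.dag_comp, hZ.eq_of_tgt (D.dag (0 : Z ⟶ Y)) 0, En.zero_comp]

/-- The projection `e† ≫ e` onto a †-equalizer `e`. -/
theorem exists_projection {C : Type u} [Category.{v} C]
    (D : DaggerData C) (heq : HasDagEqualizers D) {X Y : C} (u v : X ⟶ Y) :
    ∃ p : X ⟶ X, D.dag p = p ∧ p ≫ u = p ≫ v ∧
      ∀ {W : C} (w : W ⟶ X), w ≫ u = w ≫ v → w ≫ p = w := by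
  obtain ⟨E, e, he, hee, hu⟩ := heq u v
  refine ⟨D.dag e ≫ e, ?_, ?_, ?_⟩
  · rw [D.dag_comp, D.dag_dag]
  · rw [Category.assoc, he, Category.assoc]
  · intro W w hw
    obtain ⟨t, rfl, -⟩ := hu w hw
    rw [Category.assoc, ← Category.assoc e, hee, Category.id_comp]

/-- If the first column of the matrix of a self-adjoint `p` on a biproduct is `(1, 0)`, then so is
its first row, i.e. `p` fixes the first injection. -/
theorem inl_fixed {C : Type u} [Category.{v} C]
    [∀ X Y : C, AddCommMonoid (X ⟶ Y)] [HasZeroObject C]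
    (D : DaggerData C) (En : CMonEnriched C) {X Y P : C} (i : X ⟶ P) (j : Y ⟶ P)
    (hP : D.dag i ≫ i + D.dag j ≫ j = 𝟙 P) (p : P ⟶ P) (hp : D.dag p = p)
    (hx : i ≫ p ≫ D.dag i = 𝟙 X) (hw : j ≫ p ≫ D.dag i = 0) : i ≫ p = i := by
  have hz : i ≫ p ≫ D.dag j = 0 := by
    have := congrArg D.dag hw
    rwa [D.dag_comp, D.dag_comp, D.dag_dag, hp, dag_zero D En, Category.assoc] at this
  calc i ≫ p = (i ≫ p) ≫ (D.dag i ≫ i + D.dag j ≫ j) := by rw [hP, Category.comp_id]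
    _ = (i ≫ p ≫ D.dag i) ≫ i + (i ≫ p ≫ D.dag j) ≫ j := by
        rw [En.comp_add]; simp only [Category.assoc]
    _ = i := by rw [hx, hz, En.zero_comp, Category.id_comp, add_zero]

theorem cancel_add {C : Type u} [Category.{v} C]
    [∀ X Y : C, AddCommMonoid (X ⟶ Y)] [HasZeroObject C]
    (D : DaggerData C) (En : CMonEnriched C)
    (hbp : HasBinaryDagBiproducts D) (heq : HasDagEqualizers D)
    {X Y : C} (f g h : X ⟶ Y) (H : f + h = g + h) : f = g := by
  obtain ⟨P, i, j, hii, hjj, hij, hji, hP⟩ := hbp X X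
  have hi : ∀ k l : X ⟶ Y, i ≫ (D.dag i ≫ k + D.dag j ≫ l) = k := fun k l => by
    rw [En.comp_add, ← Category.assoc, ← Category.assoc, hii, hij, En.zero_comp,
      Category.id_comp, add_zero]
  have hj : ∀ k l : X ⟶ Y, j ≫ (D.dag i ≫ k + D.dag j ≫ l) = l := fun k l => by
    rw [En.comp_add, ← Category.assoc, ← Category.assoc, hjj, hji, En.zero_comp,
      Category.id_comp, zero_add]
  obtain ⟨p, hp, hpe, hfix⟩ := exists_projection D heq
    (D.dag i ≫ f + D.dag j ≫ h) (D.dag i ≫ g + D.dag j ≫ h)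
  have h1 : j ≫ p = j := hfix j (by rw [hj, hj])
  have h2 : (i + j) ≫ p = i + j := hfix _ (by rw [En.add_comp, En.add_comp, hi, hj, hi, hj, H])
  have hw : j ≫ p ≫ D.dag i = 0 := by rw [← Category.assoc, h1, hji]
  have hx : i ≫ p ≫ D.dag i = 𝟙 X := by
    have := congrArg (· ≫ D.dag i) h2
    simpa only [En.add_comp, Category.assoc, hw, hii, hji, add_zero] using this
  have h3 := inl_fixed D En i j hP p hp hx hw
  have h4 := congrArg (i ≫ ·) hpe
  simpa only [← Category.assoc i p, h3, hi] using h4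

theorem scalar_comm {C : Type u} [Category.{v} C] [MonoidalCategory C]
    (f g : 𝟙_ C ⟶ 𝟙_ C) : f ≫ g = g ≫ f := by
  have hf : f = (λ_ (𝟙_ C)).inv ≫ (f ▷ 𝟙_ C) ≫ (λ_ (𝟙_ C)).hom := by
    rw [unitors_equal, rightUnitor_naturality, unitors_inv_equal, Iso.inv_hom_id_assoc]
  have hg : g = (λ_ (𝟙_ C)).inv ≫ (𝟙_ C ◁ g) ≫ (λ_ (𝟙_ C)).hom := by
    rw [leftUnitor_naturality, Iso.inv_hom_id_assoc]
  rw [hf, hg]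
  simp only [Category.assoc, Iso.hom_inv_id_assoc]
  rw [← whisker_exchange_assoc]

/-- Over a simple unit, only `0` can equalize two distinct scalars. -/
theorem scalar_eq_zero {C : Type u} [Category.{v} C] [MonoidalCategory C]
    [∀ X Y : C, AddCommMonoid (X ⟶ Y)]
    (D : DaggerData C) (En : CMonEnriched C) (heq : HasDagEqualizers D)
    (hsimple : ∀ {X : C} (m : X ⟶ 𝟙_ C), Mono m → m = 0 ∨ IsIso m)
    (a b w : 𝟙_ C ⟶ 𝟙_ C) (hw : w ≫ a = w ≫ b) (hab : a ≠ b) : w = 0 := by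
  obtain ⟨E, e, he, hee, hu⟩ := heq a b
  have hm : Mono e := ⟨fun s t hst => by
    simpa only [Category.assoc, hee, Category.comp_id] using congrArg (· ≫ D.dag e) hst⟩
  obtain ⟨t, rfl, -⟩ := hu w hw
  rcases hsimple e hm with h0 | hiso
  · rw [h0, En.comp_zero]
  · exact absurd ((cancel_epi e).1 he) hab

/-- In a monoidal †-category, enriched in commutative monoids, with a simple
tensor unit, a zero object, binary †-biproducts and †-equalizers of all parallel
pairs: for scalars, `a ≫ A + b ≫ B = a ≫ B + b ≫ A` and `a ≠ b` imply `A = B`. -/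
theorem stmt14 {C : Type u} [Category.{v} C] [MonoidalCategory C]
    [∀ X Y : C, AddCommMonoid (X ⟶ Y)] [HasZeroObject C]
    (D : DaggerData C) (En : CMonEnriched C)
    (hbp : HasBinaryDagBiproducts D) (heq : HasDagEqualizers D)
    (hsimple : ∀ {X : C} (m : X ⟶ 𝟙_ C), Mono m → m = 0 ∨ IsIso m)
    (a b A B : 𝟙_ C ⟶ 𝟙_ C)
    (h : a ≫ A + b ≫ B = a ≫ B + b ≫ A) (hab : a ≠ b) :
    A = B := by
  obtain ⟨P, i, j, hii, hjj, hij, hji, hP⟩ := hbp (𝟙_ C) (𝟙_ C)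
  have hi : ∀ k l : 𝟙_ C ⟶ 𝟙_ C, i ≫ (D.dag i ≫ k + D.dag j ≫ l) = k := fun k l => by
    rw [En.comp_add, ← Category.assoc, ← Category.assoc, hii, hij, En.zero_comp,
      Category.id_comp, add_zero]
  have hj : ∀ k l : 𝟙_ C ⟶ 𝟙_ C, j ≫ (D.dag i ≫ k + D.dag j ≫ l) = l := fun k l => by
    rw [En.comp_add, ← Category.assoc, ← Category.assoc, hjj, hji, En.zero_comp,
      Category.id_comp, zero_add]
  obtain ⟨p, hp, hpe, hfix⟩ := exists_projection D heq
    (D.dag i ≫ A + D.dag j ≫ B) (D.dag i ≫ B + D.dag j ≫ A)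
  have h1 : (i + j) ≫ p = i + j :=
    hfix _ (by rw [En.add_comp, En.add_comp, hi, hj, hi, hj, add_comm])
  have h2 : (a ≫ i + b ≫ j) ≫ p = a ≫ i + b ≫ j :=
    hfix _ (by simp only [En.add_comp, Category.assoc, hi, hj, h])
  have hxw : i ≫ p ≫ D.dag i + j ≫ p ≫ D.dag i = 𝟙 _ := by
    have := congrArg (· ≫ D.dag i) h1
    simpa only [En.add_comp, Category.assoc, hii, hji, add_zero] using this
  have hab' : a ≫ i ≫ p ≫ D.dag i + b ≫ j ≫ p ≫ D.dag i = a := by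
    have := congrArg (· ≫ D.dag i) h2
    simpa only [En.add_comp, Category.assoc, hii, hji, En.comp_zero, Category.comp_id,
      add_zero] using this
  have haa : a ≫ i ≫ p ≫ D.dag i + a ≫ j ≫ p ≫ D.dag i = a := by
    rw [← En.comp_add, hxw, Category.comp_id]
  have hw : j ≫ p ≫ D.dag i = 0 := by
    refine scalar_eq_zero D En heq hsimple a b _ ?_ hab
    rw [scalar_comm _ a, scalar_comm _ b]
    refine cancel_add D En hbp heq _ _ (a ≫ i ≫ p ≫ D.dag i) ?_
    rw [add_comm, haa, add_comm, hab']
  have hx : i ≫ p ≫ D.dag i = 𝟙 _ := by rwa [hw, add_zero] at hxw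
  have h3 := inl_fixed D En i j hP p hp hx hw
  have h4 := congrArg (i ≫ ·) hpe
  simpa only [← Category.assoc i p, h3, hi] using h4
end

section
/- (Finite-family exchange lemma, the key step toward showing sums of squared norms of nonzero elements are nonzero.) In a †-category enriched in commutative monoids with a zero object, finite †-biproducts and †-equalizers of all parallel pairs: for any objects A, B, any natural number N, and any families d, e : Fin N → (A ⟶ B), if ∑_i d_i ≫ (d_i)† + ∑_i e_i ≫ (e_i)† = ∑_i d_i ≫ (e_i)† + ∑_i e_i ≫ (d_i)† (as endomorphisms of A), then d_i = e_i for all i. -/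
/-!
The families are assembled into `u = (d, e)` and `v = (e, d)`, two morphisms from `A` to the
†-biproduct of `N + N` copies of `B`. Since `f ≫ g†` is the sum of the `f_k ≫ g_k†`
(`sum_comp_dag_sum`), the hypothesis says exactly that `u ≫ u† = u ≫ v†`, and by symmetry also
that `v ≫ u† = v ≫ v†`. Hence both `u` and `v` factor through the †-equalizer `k` of `u†` and
`v†`, with factors `u ≫ k†` and `v ≫ k†`. These agree, being the daggers of `k ≫ u† = k ≫ v†`,
so `u = v` (`eq_of_comp_dag_eq`). Comparing the first `N` components gives `d = e`.

The †-equalizer thus replaces the subtraction that would turn the hypothesis into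
`(d - e) ≫ (d - e)† = 0`. Additivity of the dagger is never used.
-/

open CategoryTheory CategoryTheory.Limits CategoryTheory.MonoidalCategory

universe v u

/-- Existence of finite †-biproducts. -/
def HasFiniteDagBiproducts {C : Type u} [Category.{v} C]
    [∀ X Y : C, AddCommMonoid (X ⟶ Y)] (D : DaggerData C) : Prop :=
  ∀ (n : ℕ) (A : Fin n → C), ∃ (P : C) (i : ∀ k, A k ⟶ P),
    (∀ k, i k ≫ D.dag (i k) = 𝟙 (A k)) ∧
    (∀ k j, k ≠ j → i k ≫ D.dag (i j) = 0) ∧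
    ∑ k, D.dag (i k) ≫ i k = 𝟙 P

theorem eq_of_comp_dag_eq {C : Type u} [Category.{v} C] (D : DaggerData C)
    (heq : HasDagEqualizers D) {A P : C} (u v : A ⟶ P)
    (hu : u ≫ D.dag u = u ≫ D.dag v) (hv : v ≫ D.dag u = v ≫ D.dag v) : u = v := by
  obtain ⟨K, k, hk, hiso, hfac⟩ := heq (D.dag u) (D.dag v)
  obtain ⟨s, hs, -⟩ := hfac u hu
  obtain ⟨t, ht, -⟩ := hfac v hv
  have hk' : u ≫ D.dag k = v ≫ D.dag k := by
    simpa only [D.dag_comp, D.dag_dag] using congrArg D.dag hk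
  have hst : s = t := by
    rw [← hs, ← ht, Category.assoc, Category.assoc, hiso, Category.comp_id,
      Category.comp_id] at hk'
    exact hk'
  rw [← hs, ← ht, hst]

section

variable {C : Type u} [Category.{v} C] [∀ X Y : C, AddCommMonoid (X ⟶ Y)]

theorem CMonEnriched.comp_sum_s16 (En : CMonEnriched C) {X Y Z : C} {n : ℕ} (f : X ⟶ Y)
    (g : Fin n → (Y ⟶ Z)) : f ≫ ∑ k, g k = ∑ k, f ≫ g k :=
  map_sum (⟨⟨fun h => f ≫ h, En.comp_zero f⟩, En.comp_add f⟩ : (Y ⟶ Z) →+ (X ⟶ Z)) g _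

theorem CMonEnriched.sum_comp_s16 (En : CMonEnriched C) {X Y Z : C} {n : ℕ}
    (f : Fin n → (X ⟶ Y)) (g : Y ⟶ Z) : (∑ k, f k) ≫ g = ∑ k, f k ≫ g :=
  map_sum (⟨⟨fun h => h ≫ g, En.zero_comp g⟩, fun a b => En.add_comp a b g⟩ :
    (X ⟶ Y) →+ (X ⟶ Z)) f _

/-- The `j`-th component of the morphism into the biproduct assembled from a family. -/
theorem sum_comp_proj (D : DaggerData C) (En : CMonEnriched C) {A B P : C} {n : ℕ}
    (ι : Fin n → (B ⟶ P)) (hn : ∀ k, ι k ≫ D.dag (ι k) = 𝟙 B)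
    (ho : ∀ k j, k ≠ j → ι k ≫ D.dag (ι j) = 0) (f : Fin n → (A ⟶ B)) (j : Fin n) :
    (∑ k, f k ≫ ι k) ≫ D.dag (ι j) = f j := by
  rw [En.sum_comp_s16, Finset.sum_eq_single j]
  · rw [Category.assoc, hn, Category.comp_id]
  · intro k _ hkj
    rw [Category.assoc, ho k j hkj, En.comp_zero]
  · simp

/-- In a †-biproduct, `f ≫ g†` is computed componentwise. Inserting `∑ ι_k† ≫ ι_k = 𝟙` in the
middle avoids taking the dagger of a sum. -/
theorem sum_comp_dag_sum (D : DaggerData C) (En : CMonEnriched C) {A B P : C} {n : ℕ}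
    (ι : Fin n → (B ⟶ P)) (hn : ∀ k, ι k ≫ D.dag (ι k) = 𝟙 B)
    (ho : ∀ k j, k ≠ j → ι k ≫ D.dag (ι j) = 0) (hs : ∑ k, D.dag (ι k) ≫ ι k = 𝟙 P)
    (f g : Fin n → (A ⟶ B)) :
    (∑ k, f k ≫ ι k) ≫ D.dag (∑ k, g k ≫ ι k) = ∑ k, f k ≫ D.dag (g k) := by
  have hg : ∀ k, ι k ≫ D.dag (∑ j, g j ≫ ι j) = D.dag (g k) := fun k => by
    have := congrArg D.dag (sum_comp_proj D En ι hn ho g k)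
    rwa [D.dag_comp, D.dag_dag] at this
  rw [← Category.id_comp (D.dag (∑ k, g k ≫ ι k)), ← hs, En.sum_comp_s16 _ (D.dag _), En.comp_sum_s16]
  refine Finset.sum_congr rfl fun k _ => ?_
  rw [Category.assoc, hg, ← Category.assoc, sum_comp_proj D En ι hn ho f k]

end

/-- Finite-family exchange lemma: in a †-category enriched in commutative monoids
with a zero object, finite †-biproducts and †-equalizers of all parallel pairs,
`∑ d_i ≫ d_i† + ∑ e_i ≫ e_i† = ∑ d_i ≫ e_i† + ∑ e_i ≫ d_i†` implies `d = e`. -/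
theorem stmt16 {C : Type u} [Category.{v} C]
    [∀ X Y : C, AddCommMonoid (X ⟶ Y)] [HasZeroObject C]
    (D : DaggerData C) (En : CMonEnriched C)
    (hbp : HasFiniteDagBiproducts D) (heq : HasDagEqualizers D)
    {A B : C} (N : ℕ) (d e : Fin N → (A ⟶ B))
    (h : ∑ i, d i ≫ D.dag (d i) + ∑ i, e i ≫ D.dag (e i)
       = ∑ i, d i ≫ D.dag (e i) + ∑ i, e i ≫ D.dag (d i)) :
    ∀ i, d i = e i := by
  obtain ⟨P, ι, hn, ho, hs⟩ := hbp (N + N) (fun _ => B)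
  -- The hypothesis is symmetric in `d` and `e`, so it yields both equations needed for `u = v`,
  -- where `u = (d, e)` and `v = (e, d)`.
  have huv : ∑ k, Fin.append d e k ≫ ι k = ∑ k, Fin.append e d k ≫ ι k := by
    apply eq_of_comp_dag_eq D heq
    · rw [sum_comp_dag_sum D En ι hn ho hs, sum_comp_dag_sum D En ι hn ho hs]
      simpa only [Fin.sum_univ_add, Fin.append_left, Fin.append_right] using h
    · rw [sum_comp_dag_sum D En ι hn ho hs, sum_comp_dag_sum D En ι hn ho hs]
      simp only [Fin.sum_univ_add, Fin.append_left, Fin.append_right]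
      rw [add_comm, ← h, add_comm]
  intro i
  have hi := congrArg (· ≫ D.dag (ι (Fin.castAdd N i))) huv
  simpa [sum_comp_proj D En ι hn ho] using hi
end
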